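/- arXiv:2501.11305 — 3 statements merged into one kernel-verified Lean document; each statement's English description precedes it below -/
import Mathlib

section
/- Let L be an n×n real symmetric positive semidefinite matrix, k < n, and suppose λ_k < λ_{k+1}. If A ∈ ℝ^{n×k} satisfies the orthogonality constraint Aᵀ A = I_k and minimizes the Rayleigh quotient R_L(A) = Tr(Aᵀ L A) over all matrices in ℝ^{n×k} satisfying the orthogonality constraint, then there exists an orthogonal matrix Q ∈ ℝ^{k×k} (Qᵀ Q = I_k) such that A = V Q. -/
open Matrix

theorem sum_castLE_aux {n k : ℕ} (hk : k ≤ n) (f : Fin n → ℝ)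
    (hf : ∀ i : Fin n, k ≤ i.val → f i = 0) :
    ∑ i, f i = ∑ j : Fin k, f (Fin.castLE hk j) := by
  symm
  apply Fintype.sum_of_injective (Fin.castLE hk) (Fin.castLE_injective hk)
  · intro i hi
    apply hf
    by_contra h
    exact hi ⟨⟨i.val, by omega⟩, rfl⟩
  · intro i
    rfl

theorem row_le_one_aux {n k : ℕ} (C : Matrix (Fin n) (Fin k) ℝ) (hC : Cᵀ * C = 1)
    (i : Fin n) : ∑ j, C i j ^ 2 ≤ 1 := by
  have hP : (C * Cᵀ) * (C * Cᵀ) = C * Cᵀ := by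
    rw [Matrix.mul_assoc, ← Matrix.mul_assoc Cᵀ, hC, Matrix.one_mul]
  have hii : (C * Cᵀ) i i = ∑ j, C i j ^ 2 := by
    simp [Matrix.mul_apply, sq]
  have h1 : (C * Cᵀ) i i = ∑ l, (C * Cᵀ) i l ^ 2 := by
    conv_lhs => rw [← hP]
    rw [Matrix.mul_apply]
    refine Finset.sum_congr rfl fun l _ => ?_
    have : (C * Cᵀ) l i = (C * Cᵀ) i l := by
      simp [Matrix.mul_apply, mul_comm]
    rw [this, sq]
  have h2 : (C * Cᵀ) i i ^ 2 ≤ ∑ l, (C * Cᵀ) i l ^ 2 :=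
    Finset.single_le_sum (f := fun l => (C * Cᵀ) i l ^ 2)
      (fun l _ => sq_nonneg _) (Finset.mem_univ i)
  rw [← hii]
  nlinarith

theorem trace_diag_aux {n k : ℕ} (C : Matrix (Fin n) (Fin k) ℝ) (d : Fin n → ℝ) :
    Matrix.trace (Cᵀ * Matrix.diagonal d * C) = ∑ i, d i * ∑ j, C i j ^ 2 := by
  simp only [Matrix.trace, Matrix.diag, Matrix.mul_apply (M := Cᵀ * Matrix.diagonal d),
    Matrix.mul_diagonal, Matrix.transpose_apply]
  rw [Finset.sum_comm]
  refine Finset.sum_congr rfl fun i _ => ?_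
  rw [Finset.mul_sum]
  refine Finset.sum_congr rfl fun j _ => ?_
  ring

/-- Any minimizer of the Rayleigh quotient `Tr(Aᵀ L A)` over matrices with
orthonormal columns, for a real symmetric PSD matrix `L` with eigenvalue gap
`λ_k < λ_{k+1}`, is of the form `V Q` with `Q` orthogonal, where `V` holds the
first `k` orthonormal eigenvectors as columns. -/
theorem rayleigh_minimizer_eq_eigenbasis_mul_orthogonal
    {n k : ℕ} (hk : k < n) (hk0 : 0 < k)
    (L : Matrix (Fin n) (Fin n) ℝ) (hL : L.PosSemidef)
    (lam : Fin n → ℝ) (hmono : Monotone lam)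
    (v : Fin n → Fin n → ℝ)
    (heig : ∀ i, L.mulVec (v i) = lam i • v i)
    (horth : ∀ i j, v i ⬝ᵥ v j = if i = j then (1 : ℝ) else 0)
    (hgap : lam ⟨k - 1, by omega⟩ < lam ⟨k, hk⟩)
    (A : Matrix (Fin n) (Fin k) ℝ)
    (hA : Aᵀ * A = 1)
    (hmin : ∀ B : Matrix (Fin n) (Fin k) ℝ, Bᵀ * B = 1 →
      Matrix.trace (Aᵀ * L * A) ≤ Matrix.trace (Bᵀ * L * B)) :
    ∃ Q : Matrix (Fin k) (Fin k) ℝ, Qᵀ * Q = 1 ∧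
      A = (Matrix.of fun i j => v (Fin.castLE hk.le j) i) * Q := by
  obtain ⟨W, hWdef⟩ : ∃ W : Matrix (Fin n) (Fin n) ℝ, W = Matrix.of fun i j => v j i := ⟨_, rfl⟩
  have hWW : Wᵀ * W = 1 := by
    ext i j
    rw [Matrix.one_apply, ← horth i j]
    simp [hWdef, Matrix.mul_apply, dotProduct]
  have hWW' : W * Wᵀ = 1 := mul_eq_one_comm.mp hWW
  have hLW : L * W = W * Matrix.diagonal lam := by
    ext i j
    have := congrFun (heig j) i
    simp only [Matrix.mulVec, dotProduct, Pi.smul_apply, smul_eq_mul] at this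
    rw [Matrix.mul_diagonal, Matrix.mul_apply]
    simp only [hWdef, Matrix.of_apply]
    rw [this, mul_comm]
  have hLeq : L = W * Matrix.diagonal lam * Wᵀ := by
    rw [← hLW, Matrix.mul_assoc, hWW', Matrix.mul_one]
  have htr : ∀ B : Matrix (Fin n) (Fin k) ℝ,
      Matrix.trace (Bᵀ * L * B) = ∑ i, lam i * ∑ j, (Wᵀ * B) i j ^ 2 := by
    intro B
    rw [← trace_diag_aux, hLeq]
    simp only [Matrix.transpose_mul, Matrix.transpose_transpose, Matrix.mul_assoc]
  obtain ⟨C, hCdef⟩ : ∃ C, C = Wᵀ * A := ⟨_, rfl⟩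
  have hAC : A = W * C := by
    rw [hCdef, ← Matrix.mul_assoc, hWW', Matrix.one_mul]
  have hCC : Cᵀ * C = 1 := by
    rw [hCdef, Matrix.transpose_mul, Matrix.transpose_transpose, Matrix.mul_assoc,
      ← Matrix.mul_assoc W, hWW', Matrix.one_mul, hA]
  have hp1 := row_le_one_aux C hCC
  have hp0 : ∀ i, 0 ≤ ∑ j, C i j ^ 2 := fun i => Finset.sum_nonneg fun j _ => sq_nonneg _
  have hpsum : ∑ i, ∑ j, C i j ^ 2 = k := by
    have h := trace_diag_aux C (fun _ => 1)
    simp only [Matrix.diagonal_one, Matrix.mul_one, hCC, Matrix.trace_one, one_mul,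
      Fintype.card_fin] at h
    exact h.symm
  obtain ⟨V, hV⟩ : ∃ V : Matrix (Fin n) (Fin k) ℝ,
    V = Matrix.of fun i j => v (Fin.castLE hk.le j) i := ⟨_, rfl⟩
  have hVV : Vᵀ * V = 1 := by
    ext i j
    have := horth (Fin.castLE hk.le i) (Fin.castLE hk.le j)
    simp only [(Fin.castLE_injective hk.le).eq_iff] at this
    rw [Matrix.one_apply, ← this]
    simp [hV, Matrix.mul_apply, dotProduct]
  have hWV : ∀ i j, (Wᵀ * V) i j = if i = Fin.castLE hk.le j then 1 else 0 := by
    intro i j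
    rw [← horth]
    simp [hV, hWdef, Matrix.mul_apply, dotProduct]
  have hle := hmin V hVV
  have hVtr : Matrix.trace (Vᵀ * L * V) = ∑ j : Fin k, lam (Fin.castLE hk.le j) := by
    rw [htr]
    simp only [hWV, Finset.mul_sum]
    rw [Finset.sum_comm]
    refine Finset.sum_congr rfl fun j _ => ?_
    simp
  rw [hVtr, htr, ← hCdef] at hle
  obtain ⟨m, hm⟩ : ∃ m, m = lam ⟨k - 1, by omega⟩ := ⟨_, rfl⟩
  rw [← hm] at hgap
  have hind : ∀ g : Fin n → ℝ, ∑ i : Fin n, g i * (if i.val < k then 1 else 0)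
      = ∑ j : Fin k, g (Fin.castLE hk.le j) := by
    intro g
    rw [sum_castLE_aux hk.le]
    · simp
    · intro i hi
      simp [hi]
  have hterm : ∀ i : Fin n, 0 ≤ (lam i - m) * (∑ j, C i j ^ 2 - if i.val < k then 1 else 0) := by
    intro i
    split_ifs with h
    · have : lam i ≤ m := by
        rw [hm]
        exact hmono (Fin.mk_le_mk.mpr (by omega) : i ≤ ⟨k - 1, by omega⟩)
      exact mul_nonneg_of_nonpos_of_nonpos (by linarith) (by linarith [hp1 i])
    · have : lam ⟨k, hk⟩ ≤ lam i := hmono (Fin.mk_le_mk.mpr (by omega) : ⟨k, hk⟩ ≤ i)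
      exact mul_nonneg (by linarith) (by linarith [hp0 i])
  have hsum : ∑ i : Fin n, (lam i - m) * (∑ j, C i j ^ 2 - if i.val < k then 1 else 0) ≤ 0 := by
    have e : ∑ i : Fin n, (lam i - m) * (∑ j, C i j ^ 2 - if i.val < k then 1 else 0)
        = ∑ i, lam i * ∑ j, C i j ^ 2 - m * ∑ i, ∑ j, C i j ^ 2
          - ∑ i : Fin n, lam i * (if i.val < k then 1 else 0)
          + ∑ i : Fin n, m * (if i.val < k then 1 else 0) := by
      rw [Finset.mul_sum (s := Finset.univ) (a := m), ← Finset.sum_sub_distrib,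
        ← Finset.sum_sub_distrib, ← Finset.sum_add_distrib]
      refine Finset.sum_congr rfl fun i _ => ?_
      ring
    rw [e, hind lam, hind (fun _ => m), hpsum]
    simp only [Finset.sum_const, Finset.card_univ, Fintype.card_fin, nsmul_eq_mul]
    linarith
  have hzero := (Finset.sum_eq_zero_iff_of_nonneg (fun i _ => hterm i)).mp
    (le_antisymm hsum (Finset.sum_nonneg fun i _ => hterm i))
  have hC0 : ∀ i : Fin n, k ≤ i.val → ∀ j, C i j = 0 := by
    intro i hi j
    have h := hzero i (Finset.mem_univ i)
    rw [if_neg (by omega), sub_zero] at h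
    have h1 : lam ⟨k, hk⟩ ≤ lam i := hmono (Fin.mk_le_mk.mpr hi : ⟨k, hk⟩ ≤ i)
    have h2 : ∑ j, C i j ^ 2 = 0 := by
      rcases mul_eq_zero.mp h with h | h
      · linarith
      · exact h
    have h3 := (Finset.sum_eq_zero_iff_of_nonneg (fun j _ => sq_nonneg (C i j))).mp h2 j
      (Finset.mem_univ j)
    exact pow_eq_zero_iff (two_ne_zero) |>.mp h3
  refine ⟨Matrix.of fun i j => C (Fin.castLE hk.le i) j, ?_, ?_⟩
  · rw [← hCC]
    ext i j
    simp only [Matrix.mul_apply, Matrix.transpose_apply, Matrix.of_apply]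
    rw [sum_castLE_aux hk.le (fun l => C l i * C l j)]
    intro l hl
    simp [hC0 l hl]
  · ext i j
    rw [hAC]
    simp only [Matrix.mul_apply, Matrix.of_apply]
    rw [sum_castLE_aux hk.le (fun l => W i l * C l j)]
    · simp [hWdef]
    · intro l hl
      simp [hC0 l hl]
end

section
/- Let L be an n×n real symmetric matrix, k < n, and suppose λ_k < λ_{k+1}. If B ∈ ℝ^{n×k} satisfies Bᵀ B = I_k and Tr(Bᵀ L B) = λ_1 + λ_2 + ⋯ + λ_k, then the column space of B equals the span of v_1, …, v_k; equivalently, B = V Q' for some orthogonal matrix Q' ∈ ℝ^{k×k}. -/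
open Matrix

theorem kf_sum_castLE {n k : ℕ} (h : k ≤ n) (g : Fin n → ℝ)
    (hg : ∀ i : Fin n, k ≤ i.val → g i = 0) :
    ∑ j : Fin k, g (Fin.castLE h j) = ∑ i, g i := by
  refine Fintype.sum_of_injective (Fin.castLE h) (Fin.castLE_injective h) _ _ ?_ (fun _ => rfl)
  intro i hi
  apply hg
  by_contra hlt
  exact hi ⟨⟨i.val, by omega⟩, by ext; rfl⟩

theorem kf_span_le {n k : ℕ} (X Y : Matrix (Fin n) (Fin k) ℝ) (Q : Matrix (Fin k) (Fin k) ℝ)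
    (h : X = Y * Q) :
    Submodule.span ℝ (Set.range fun j : Fin k => fun i => X i j) ≤
      Submodule.span ℝ (Set.range fun j : Fin k => fun i => Y i j) := by
  rw [Submodule.span_le]
  rintro _ ⟨j, rfl⟩
  have : (fun i => X i j) = ∑ l, Q l j • (fun i => Y i l) := by
    ext i
    simp [h, Matrix.mul_apply, Finset.sum_apply, mul_comm]
  simp only [SetLike.mem_coe]
  rw [this]
  exact Submodule.sum_mem _ fun l _ => Submodule.smul_mem _ _ (Submodule.subset_span ⟨l, rfl⟩)

theorem kf_diag_le {n k : ℕ} (C : Matrix (Fin n) (Fin k) ℝ) (hC : Cᵀ * C = 1) (i : Fin n) :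
    (C * Cᵀ) i i ≤ 1 := by
  have hP : (C * Cᵀ) * (C * Cᵀ)ᵀ = C * Cᵀ := by
    rw [Matrix.transpose_mul, Matrix.transpose_transpose, Matrix.mul_assoc,
      ← Matrix.mul_assoc Cᵀ, hC, Matrix.one_mul]
  have h1 : (C * Cᵀ) i i = ∑ j, (C * Cᵀ) i j * (C * Cᵀ) i j := by
    conv_lhs => rw [← hP, Matrix.mul_apply]
    rfl
  have h2 : (C * Cᵀ) i i * (C * Cᵀ) i i ≤ ∑ j, (C * Cᵀ) i j * (C * Cᵀ) i j :=
    Finset.single_le_sum (f := fun j => (C * Cᵀ) i j * (C * Cᵀ) i j)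
      (fun j _ => mul_self_nonneg _) (Finset.mem_univ i)
  nlinarith


/-- Equality case of the Ky Fan minimum principle. If `λ_k < λ_{k+1}`,
`B` has orthonormal columns and `Tr(Bᵀ L B) = λ_1 + ⋯ + λ_k`, then the column space of
`B` is the span of `v_1, …, v_k`; equivalently `B = V Q'` for some orthogonal `Q'`. -/
theorem ky_fan_equality_case
    {n k : ℕ} (hk : k < n) (hk0 : 0 < k)
    (L : Matrix (Fin n) (Fin n) ℝ) (hL : L.IsSymm)
    (lam : Fin n → ℝ) (hmono : Monotone lam)
    (v : Fin n → Fin n → ℝ)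
    (heig : ∀ i, L.mulVec (v i) = lam i • v i)
    (horth : ∀ i j, v i ⬝ᵥ v j = if i = j then (1 : ℝ) else 0)
    (hgap : lam ⟨k - 1, by omega⟩ < lam ⟨k, hk⟩)
    (B : Matrix (Fin n) (Fin k) ℝ) (hB : Bᵀ * B = 1)
    (htr : Matrix.trace (Bᵀ * L * B) = ∑ j : Fin k, lam (Fin.castLE hk.le j)) :
    Submodule.span ℝ (Set.range fun j : Fin k => fun i => B i j) =
      Submodule.span ℝ (Set.range fun j : Fin k => v (Fin.castLE hk.le j)) ∧
    ∃ Q' : Matrix (Fin k) (Fin k) ℝ, Q'ᵀ * Q' = 1 ∧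
      B = (Matrix.of fun i j => v (Fin.castLE hk.le j) i) * Q' := by
  classical
  set W : Matrix (Fin n) (Fin n) ℝ := Matrix.of fun i j => v j i with hWdef
  have hWW : Wᵀ * W = 1 := by
    ext i j
    rw [Matrix.one_apply, ← horth i j]
    rfl
  have hWW' : W * Wᵀ = 1 := mul_eq_one_comm.mp hWW
  have hLW : L * W = W * Matrix.diagonal lam := by
    ext i j
    rw [Matrix.mul_diagonal]
    have := congrFun (heig j) i
    simp only [Pi.smul_apply, smul_eq_mul] at this
    rw [mul_comm]
    exact this
  obtain ⟨C, hCdef⟩ : ∃ C, C = Wᵀ * B := ⟨_, rfl⟩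
  have hBC : B = W * C := by
    rw [hCdef, ← Matrix.mul_assoc, hWW', Matrix.one_mul]
  have hC : Cᵀ * C = 1 := by
    rw [← hB, hBC, Matrix.transpose_mul, Matrix.mul_assoc, ← Matrix.mul_assoc Wᵀ, hWW,
      Matrix.one_mul]
  have hT : Bᵀ * L * B = Cᵀ * (Matrix.diagonal lam * C) := by
    rw [hBC, Matrix.transpose_mul, Matrix.mul_assoc, ← Matrix.mul_assoc L, hLW,
      Matrix.mul_assoc, Matrix.mul_assoc, ← Matrix.mul_assoc Wᵀ, hWW, Matrix.one_mul]
  obtain ⟨p, hp⟩ : ∃ p : Fin n → ℝ, p = fun i => (C * Cᵀ) i i := ⟨_, rfl⟩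
  have hp1 : ∀ i, p i ≤ 1 := fun i => by rw [hp]; exact kf_diag_le C hC i
  have hpe : ∀ i, p i = ∑ j, C i j * C i j := fun i => by rw [hp]; rfl
  have hp0 : ∀ i, 0 ≤ p i := fun i => by
    rw [hpe]; exact Finset.sum_nonneg fun j _ => mul_self_nonneg _
  have hps : ∑ i, p i = k := by
    have : Matrix.trace (C * Cᵀ) = k := by rw [Matrix.trace_mul_comm, hC]; simp
    rw [← this, hp]; rfl
  have hls : ∑ i, lam i * p i = ∑ j : Fin k, lam (Fin.castLE hk.le j) := by
    rw [← htr, hT, Matrix.trace_mul_comm, Matrix.mul_assoc, hp]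
    simp only [Matrix.trace, Matrix.diag, Matrix.diagonal_mul]
  obtain ⟨f, hf⟩ : ∃ f : Fin n → ℝ, f = fun i => if i.val < k then 1 else 0 := ⟨_, rfl⟩
  have hf1 : ∀ i : Fin n, i.val < k → f i = 1 := fun i hi => by rw [hf]; simp [hi]
  have hf0 : ∀ i : Fin n, k ≤ i.val → f i = 0 := fun i hi => by rw [hf]; simp [hi]
  have hfs : ∑ i, f i = k := by
    rw [← kf_sum_castLE hk.le f hf0, Finset.sum_congr rfl fun j _ => hf1 (Fin.castLE hk.le j) j.2]
    simp
  have hfl : ∑ i, lam i * f i = ∑ j : Fin k, lam (Fin.castLE hk.le j) := by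
    rw [← kf_sum_castLE hk.le (fun i => lam i * f i) (fun i hi => by simp [hf0 i hi])]
    exact Finset.sum_congr rfl fun j _ => by rw [hf1 (Fin.castLE hk.le j) j.2, mul_one]
  obtain ⟨a, ha⟩ : ∃ a, a = lam ⟨k - 1, by omega⟩ := ⟨_, rfl⟩
  have hgt : ∀ i : Fin n, k ≤ i.val → 0 < lam i - a := fun i hi => by
    have : lam ⟨k, hk⟩ ≤ lam i := hmono hi
    rw [ha]; linarith
  have hle : ∀ i : Fin n, i.val < k → lam i - a ≤ 0 := fun i hi => by
    have : lam i ≤ lam ⟨k - 1, by omega⟩ :=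
      hmono (show i.val ≤ k - 1 by omega)
    rw [ha]; linarith
  have hnn : ∀ i ∈ Finset.univ, 0 ≤ (lam i - a) * (p i - f i) := fun i _ => by
    rcases lt_or_ge i.val k with hi | hi
    · rw [hf1 i hi]
      exact mul_nonneg_of_nonpos_of_nonpos (hle i hi) (by linarith [hp1 i])
    · rw [hf0 i hi, sub_zero]
      exact mul_nonneg (hgt i hi).le (hp0 i)
  have hsum : ∑ i, (lam i - a) * (p i - f i) = 0 := by
    have : ∀ i, (lam i - a) * (p i - f i) = lam i * p i - lam i * f i - (a * p i - a * f i) :=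
      fun i => by ring
    simp only [this, Finset.sum_sub_distrib, ← Finset.mul_sum, hls, hfl, hps, hfs]
    ring
  have hz := (Finset.sum_eq_zero_iff_of_nonneg hnn).mp hsum
  have hC0 : ∀ i : Fin n, k ≤ i.val → ∀ j, C i j = 0 := fun i hi j => by
    have h := hz i (Finset.mem_univ i)
    rw [hf0 i hi, sub_zero] at h
    have h' : p i = 0 := (mul_eq_zero.mp h).resolve_left (hgt i hi).ne'
    rw [hpe] at h'
    exact mul_self_eq_zero.mp
      ((Finset.sum_eq_zero_iff_of_nonneg fun j _ => mul_self_nonneg (C i j)).mp h' j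
        (Finset.mem_univ j))
  obtain ⟨Q, hQ⟩ : ∃ Q : Matrix (Fin k) (Fin k) ℝ,
    Q = Matrix.of fun l j => C (Fin.castLE hk.le l) j := ⟨_, rfl⟩
  have hQQ : Qᵀ * Q = 1 := by
    rw [← hC]
    ext i j
    rw [Matrix.mul_apply, Matrix.mul_apply, hQ]
    exact kf_sum_castLE hk.le (fun l => Cᵀ i l * C l j) (fun l hl => by simp [hC0 l hl])
  have hBQ : B = (Matrix.of fun i j => v (Fin.castLE hk.le j) i) * Q := by
    rw [hBC]
    ext i j
    rw [Matrix.mul_apply, Matrix.mul_apply, hQ]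
    exact (kf_sum_castLE hk.le (fun l => W i l * C l j) (fun l hl => by simp [hC0 l hl])).symm
  refine ⟨le_antisymm (kf_span_le _ _ Q hBQ) (kf_span_le (Matrix.of fun i j => v (Fin.castLE hk.le j) i) _ Qᵀ ?_), Q, hQQ, hBQ⟩
  conv_rhs => rw [hBQ]
  rw [Matrix.mul_assoc, mul_eq_one_comm.mp hQQ, Matrix.mul_one]
end

section
/- Let L be an n×n real symmetric matrix, k < n, and suppose λ_k < λ_{k+1}. If A ∈ ℝ^{n×k} satisfies Aᵀ A = I_k and Tr(Aᵀ L A) = λ_1 + λ_2 + ⋯ + λ_k, and d_1 ≤ d_2 ≤ ⋯ ≤ d_k are the eigenvalues of the k×k symmetric matrix Aᵀ L A, then d_i = λ_i for every i = 1, …, k. -/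
open Matrix Polynomial

theorem compression_aux {n k : ℕ} (hk : k ≤ n) (lam : Fin n → ℝ) (hmono : Monotone lam)
    (d : Fin k → ℝ) (hd : Monotone d) (W : Matrix (Fin n) (Fin k) ℝ) (hW : Wᵀ * W = 1)
    (hD : Wᵀ * diagonal lam * W = diagonal d) (i : Fin k) :
    lam (Fin.castLE hk i) ≤ d i := by
  let M : Matrix (Fin k) (Fin k) ℝ := fun r =>
    if r < i then W (Fin.castLE hk r) else if r = i then 0 else Pi.single r 1
  have hdet : M.det = 0 := by
    apply Matrix.det_eq_zero_of_row_eq_zero i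
    intro j
    simp [M]
  obtain ⟨c, hc0, hc⟩ := Matrix.exists_mulVec_eq_zero_iff.mpr hdet
  have h1 : ∀ l : Fin n, l < Fin.castLE hk i → (W *ᵥ c) l = 0 := by
    intro l hl
    have hl' : l.1 < i.1 := hl
    have h := congrFun hc ⟨l.1, by omega⟩
    have h2 : (⟨l.1, by omega⟩ : Fin k) < i := hl'
    simpa [Matrix.mulVec, M, h2] using h
  have h2 : ∀ j : Fin k, i < j → c j = 0 := by
    intro j hj
    have h := congrFun hc j
    simpa [Matrix.mulVec, M, not_lt.mpr hj.le, hj.ne'] using h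
  have e1 : (W *ᵥ c) ⬝ᵥ (W *ᵥ c) = c ⬝ᵥ c := by
    rw [Matrix.dotProduct_mulVec, ← Matrix.mulVec_transpose, Matrix.mulVec_mulVec, hW,
      Matrix.one_mulVec]
  have e2 : (W *ᵥ c) ⬝ᵥ (diagonal lam *ᵥ (W *ᵥ c)) = c ⬝ᵥ (diagonal d *ᵥ c) := by
    rw [← hD, ← Matrix.mulVec_mulVec, ← Matrix.mulVec_mulVec,
      Matrix.dotProduct_mulVec c Wᵀ, Matrix.vecMul_transpose]
  have l1 : lam (Fin.castLE hk i) * ((W *ᵥ c) ⬝ᵥ (W *ᵥ c)) ≤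
      (W *ᵥ c) ⬝ᵥ (diagonal lam *ᵥ (W *ᵥ c)) := by
    simp only [dotProduct, Matrix.mulVec_diagonal, Finset.mul_sum]
    apply Finset.sum_le_sum
    intro l _
    rcases lt_or_ge l (Fin.castLE hk i) with h | h
    · simp [h1 l h]
    · nlinarith [hmono h, mul_self_nonneg ((W *ᵥ c) l)]
  have l2 : c ⬝ᵥ (diagonal d *ᵥ c) ≤ d i * (c ⬝ᵥ c) := by
    simp only [dotProduct, Matrix.mulVec_diagonal, Finset.mul_sum]
    apply Finset.sum_le_sum
    intro l _
    rcases lt_or_ge i l with h | h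
    · simp [h2 l h]
    · nlinarith [hd h, mul_self_nonneg (c l)]
  have pos : 0 < c ⬝ᵥ c := by
    have h0 : 0 ≤ c ⬝ᵥ c := Finset.sum_nonneg fun l _ => mul_self_nonneg _
    exact lt_of_le_of_ne h0 fun h => hc0 (dotProduct_self_eq_zero.mp h.symm)
  rw [e1] at l1
  rw [e2] at l1
  exact le_of_mul_le_mul_right (l1.trans l2) pos

/-- If `A` has orthonormal columns, `Tr(Aᵀ L A) = λ_1 + ⋯ + λ_k`, and
`d_1 ≤ ⋯ ≤ d_k` are the eigenvalues (with multiplicity) of `Aᵀ L A`, then `d_i = λ_i`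
for every `i`. -/
theorem compression_eigenvalues_eq_of_trace_eq
    {n k : ℕ} (hk : k < n) (hk0 : 0 < k)
    (L : Matrix (Fin n) (Fin n) ℝ) (hL : L.IsSymm)
    (lam : Fin n → ℝ) (hmono : Monotone lam)
    (v : Fin n → Fin n → ℝ)
    (heig : ∀ i, L.mulVec (v i) = lam i • v i)
    (horth : ∀ i j, v i ⬝ᵥ v j = if i = j then (1 : ℝ) else 0)
    (hgap : lam ⟨k - 1, by omega⟩ < lam ⟨k, hk⟩)
    (A : Matrix (Fin n) (Fin k) ℝ) (hA : Aᵀ * A = 1)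
    (htr : Matrix.trace (Aᵀ * L * A) = ∑ j : Fin k, lam (Fin.castLE hk.le j))
    (d : Fin k → ℝ) (hd_mono : Monotone d)
    (hd : (Aᵀ * L * A).charpoly = ∏ i : Fin k, (X - C (d i))) :
    ∀ i : Fin k, d i = lam (Fin.castLE hk.le i) := by
  set B := Aᵀ * L * A with hB
  have hBs : B.IsHermitian := by
    simp only [Matrix.IsHermitian, Matrix.conjTranspose_eq_transpose_of_trivial, hB,
      Matrix.transpose_mul, Matrix.transpose_transpose, hL.eq, Matrix.mul_assoc]
  have hroots : Multiset.map d Finset.univ.val = Multiset.map hBs.eigenvalues Finset.univ.val := by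
    have h := hBs.roots_charpoly_eq_eigenvalues
    have h3 : (∏ i : Fin k, (X - C (d i))) =
        ((Multiset.map d Finset.univ.val).map fun a => X - C a).prod := by
      rw [Multiset.map_map]; rfl
    rw [hd, h3, Polynomial.roots_multiset_prod_X_sub_C] at h
    simpa using h
  obtain ⟨σ, hσ⟩ : ∃ σ : Fin k ≃ Fin k, d = hBs.eigenvalues ∘ σ := by
    refine ⟨Tuple.sort hBs.eigenvalues, ?_⟩
    apply List.ofFn_injective
    have hp : (List.ofFn d).Perm (List.ofFn hBs.eigenvalues) := by
      have h4 : ∀ f : Fin k → ℝ, ((List.ofFn f : List ℝ) : Multiset ℝ) =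
          Multiset.map f Finset.univ.val := by
        intro f
        rw [Fin.univ_val_map]
      rw [← Multiset.coe_eq_coe, h4, h4, hroots]
    exact List.Perm.eq_of_sortedLE hd_mono.sortedLE_ofFn
      (Tuple.monotone_sort hBs.eigenvalues).sortedLE_ofFn
      (hp.trans (Equiv.Perm.ofFn_comp_perm _ _).symm)
  let U : Matrix (Fin k) (Fin k) ℝ := fun a j => hBs.eigenvectorBasis (σ j) a
  have hU : Uᵀ * U = 1 := by
    ext a b
    have h := hBs.eigenvectorBasis.inner_eq_ite (σ b) (σ a)
    simp only [EuclideanSpace.inner_eq_star_dotProduct, star_trivial, σ.injective.eq_iff] at h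
    rw [Matrix.one_apply]
    simp only [eq_comm (a := b)] at h
    exact h
  have hBU : B * U = U * diagonal d := by
    ext a j
    have h := congrFun (hBs.mulVec_eigenvectorBasis (σ j)) a
    rw [Matrix.mul_diagonal, hσ]
    simp only [Pi.smul_apply, smul_eq_mul] at h
    rw [Function.comp_apply, mul_comm]
    exact h
  let V : Matrix (Fin n) (Fin n) ℝ := v
  have hV : V * Vᵀ = 1 := by
    ext a b
    rw [Matrix.one_apply]
    exact horth a b
  have hV' : Vᵀ * V = 1 := mul_eq_one_comm.mp hV
  have hLV : L * Vᵀ = Vᵀ * diagonal lam := by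
    ext a j
    have h := congrFun (heig j) a
    rw [Matrix.mul_diagonal, mul_comm]
    exact h
  have hLL : L = Vᵀ * diagonal lam * V := by
    rw [← hLV, Matrix.mul_assoc, hV', Matrix.mul_one]
  have hle : ∀ i, lam (Fin.castLE hk.le i) ≤ d i := by
    apply compression_aux hk.le lam hmono d hd_mono (V * A * U)
    · calc (V * A * U)ᵀ * (V * A * U) = Uᵀ * (Aᵀ * (Vᵀ * V) * A) * U := by
            simp only [Matrix.transpose_mul, Matrix.mul_assoc]
        _ = 1 := by rw [hV', Matrix.mul_one, hA, Matrix.mul_one, hU]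
    · calc (V * A * U)ᵀ * diagonal lam * (V * A * U)
          = Uᵀ * ((Aᵀ * (Vᵀ * diagonal lam * V) * A) * U) := by
            simp only [Matrix.transpose_mul, Matrix.mul_assoc]
        _ = diagonal d := by
            rw [← hLL, ← hB, hBU, ← Matrix.mul_assoc, hU, Matrix.one_mul]
  have hsum : ∑ j : Fin k, lam (Fin.castLE hk.le j) = ∑ j, d j := by
    rw [← htr, hBs.trace_eq_sum_eigenvalues, hσ]
    simpa using (Equiv.sum_comp σ hBs.eigenvalues).symm
  intro i
  exact ((Finset.sum_eq_sum_iff_of_le fun i _ => hle i).mp hsum i (Finset.mem_univ i)).symm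
end
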